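/- arXiv:2403.10671 — 2 statements merged into one kernel-verified Lean document; each statement's English description precedes it below -/
import Mathlib

section
/- Let θ̂ : ℝ → ℝ^d be a prediction-regularized MAP path for L and f, i.e. ∇L(θ̂(λ)) + λ∇f(θ̂(λ)) = 0 for all λ in a neighborhood of 0. Assume θ̂ is differentiable at 0, f is continuously differentiable on a neighborhood of θ̂(0), ∇L is differentiable at θ̂(0) with Hessian H = ∇²L(θ̂(0)), and H is invertible. Then the derivative of θ̂ at λ = 0 satisfies θ̂′(0) = −H⁻¹ ∇f(θ̂(0)); equivalently θ̂′(0) = P⁻¹ ∇f(θ̂(0)) where P = −H. -/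
open scoped RealInnerProductSpace Topology

/-!
Along the path, `∇L (θ l) = -(l • ∇f (θ l))`. Since the factor `l` vanishes at `0`, mere continuity
of `∇f ∘ θ` makes the right-hand side differentiable at `0`, with derivative `-∇f (θ 0)`. As the
derivative `H` of `∇L` at `θ 0` is invertible, differentiability passes from `∇L ∘ θ` to the
continuous path `θ`, as in the easy half of the inverse function theorem.
-/

section NontriviallyNormedField

variable {𝕜 E F : Type*} [NontriviallyNormedField 𝕜]
  [NormedAddCommGroup E] [NormedSpace 𝕜 E] [NormedAddCommGroup F] [NormedSpace 𝕜 F]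

theorem hasDerivAt_sub_smul_of_continuousAt {g : 𝕜 → F} {a : 𝕜} (hg : ContinuousAt g a) :
    HasDerivAt (fun t ↦ (t - a) • g t) (g a) a := by
  rw [hasDerivAt_iff_tendsto_slope]
  refine (hg.tendsto.mono_left nhdsWithin_le_nhds).congr' ?_
  filter_upwards [self_mem_nhdsWithin] with t (ht : t ≠ a)
  simp [slope_def_module, smul_smul, sub_ne_zero.mpr ht]

theorem hasDerivAt_of_eventually_add_sub_smul_eq_zero {Φ : E → F} {Φ' : E →L[𝕜] F}
    {Φ'symm : F →L[𝕜] E} {γ : 𝕜 → E} {g : 𝕜 → F} {a : 𝕜}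
    (hzero : ∀ᶠ t in 𝓝 a, Φ (γ t) + (t - a) • g t = 0) (hγ : ContinuousAt γ a)
    (hΦ : HasFDerivAt Φ Φ' (γ a)) (hΦ'symm : Function.LeftInverse Φ'symm Φ')
    (hg : ContinuousAt g a) :
    HasDerivAt γ (-(Φ'symm (g a))) a := by
  have hΦγ : Φ ∘ γ =ᶠ[𝓝 a] fun t ↦ -((t - a) • g t) :=
    hzero.mono fun _ ht ↦ eq_neg_of_add_eq_zero_left ht
  have hrhs : HasDerivAt (fun t ↦ -((t - a) • g t)) (-(g a)) a :=
    (hasDerivAt_sub_smul_of_continuousAt hg).fun_neg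
  simpa using (hΦ.of_comp_of_leftInverse hγ hrhs.hasFDerivAt hΦγ hΦ'symm).hasDerivAt

end NontriviallyNormedField

theorem continuousAt_gradient_of_contDiffAt {𝕜 E : Type*} [RCLike 𝕜] [NormedAddCommGroup E]
    [InnerProductSpace 𝕜 E] [CompleteSpace E] {f : E → 𝕜} {x : E} {n : WithTop ℕ∞}
    (hf : ContDiffAt 𝕜 n f x) (hn : n ≠ 0) : ContinuousAt (gradient f) x :=
  (InnerProductSpace.toDual 𝕜 E).symm.continuous.continuousAt.comp (hf.continuousAt_fderiv hn)

theorem regvar_path_deriv_general {E : Type*} [NormedAddCommGroup E] [InnerProductSpace ℝ E]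
    [CompleteSpace E] {L f : E → ℝ} {θ : ℝ → E} {H : E ≃L[ℝ] E}
    (hstat : ∀ᶠ l in 𝓝 (0 : ℝ), gradient L (θ l) + l • gradient f (θ l) = 0)
    (hθ : ContinuousAt θ 0) (hf : ContDiffAt ℝ 1 f (θ 0))
    (hL : HasFDerivAt (gradient L) (H : E →L[ℝ] E) (θ 0)) :
    HasDerivAt θ (-(H.symm (gradient f (θ 0)))) 0 := by
  have hgrad : ContinuousAt (fun l ↦ gradient f (θ l)) 0 :=
    ContinuousAt.comp (f := θ) (continuousAt_gradient_of_contDiffAt hf one_ne_zero) hθ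
  have hzero : ∀ᶠ l in 𝓝 (0 : ℝ), gradient L (θ l) + (l - 0) • gradient f (θ l) = 0 := by
    simpa only [sub_zero] using hstat
  exact hasDerivAt_of_eventually_add_sub_smul_eq_zero (Φ'symm := (H.symm : E →L[ℝ] E))
    hzero hθ hL H.symm_apply_apply hgrad

/-- The derivative of the prediction-regularized MAP path at
`λ = 0` is `θ̂′(0) = −H⁻¹ ∇f(θ̂ 0) = P⁻¹ ∇f(θ̂ 0)` where `P = −H`. -/
theorem regvar_path_deriv
    (d : ℕ) (L f : EuclideanSpace ℝ (Fin d) → ℝ)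
    (θ : ℝ → EuclideanSpace ℝ (Fin d))
    (H : EuclideanSpace ℝ (Fin d) ≃L[ℝ] EuclideanSpace ℝ (Fin d))
    (hstat : ∀ᶠ l in 𝓝 (0 : ℝ),
      gradient L (θ l) + l • gradient f (θ l) = 0)
    (hθ : DifferentiableAt ℝ θ 0)
    (hf : ContDiffAt ℝ 1 f (θ 0))
    (hL : HasFDerivAt (gradient L)
      (H : EuclideanSpace ℝ (Fin d) →L[ℝ] EuclideanSpace ℝ (Fin d)) (θ 0)) :
    deriv θ 0 = -(H.symm (gradient f (θ 0))) :=
  (regvar_path_deriv_general hstat hθ.continuousAt hf hL).deriv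
end

section
/- Let θ̂ : ℝ → ℝ^d be a prediction-regularized MAP path for L and f, i.e. ∇L(θ̂(λ)) + λ∇f(θ̂(λ)) = 0 for all λ in a neighborhood of 0. Assume θ̂ is differentiable at 0, f is continuously differentiable on a neighborhood of θ̂(0), ∇L is differentiable at θ̂(0) with Hessian H = ∇²L(θ̂(0)), and H is invertible. Then the finite-difference RegVar estimator converges to the linearized-Laplace variance: (1/λ)·(f(θ̂(λ)) − f(θ̂(0))) tends to ⟨∇f(θ̂(0)), P⁻¹ ∇f(θ̂(0))⟩ as λ → 0, where P = −H. -/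
open scoped RealInnerProductSpace Topology

/-!
Along the path, `∇L(θ̂(λ)) = -λ ∇f(θ̂(λ))`, and the right-hand side has derivative `-∇f(θ̂(0))` at
`λ = 0` because `∇f ∘ θ̂` is continuous there. Inverting the derivative `H` of `∇L`, as in the easy
half of the inverse function theorem, gives `θ̂'(0) = -H⁻¹ ∇f(θ̂(0)) = P⁻¹ ∇f(θ̂(0))`. The finite
difference is the difference quotient of `f ∘ θ̂`, so the chain rule gives its limit.
-/

section StationaryPath

variable {𝕜 E F : Type*} [NontriviallyNormedField 𝕜]
  [NormedAddCommGroup E] [NormedSpace 𝕜 E] [NormedAddCommGroup F] [NormedSpace 𝕜 F]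

theorem hasDerivAt_sub_smul_of_continuousAt_s5 {u : 𝕜 → F} {a : 𝕜} (hu : ContinuousAt u a) :
    HasDerivAt (fun x => (x - a) • u x) (u a) a := by
  rw [hasDerivAt_iff_tendsto_slope]
  refine (hu.tendsto.mono_left nhdsWithin_le_nhds).congr' ?_
  filter_upwards [self_mem_nhdsWithin] with x (hx : x ≠ a)
  simp [slope, inv_smul_smul₀ (sub_ne_zero.2 hx)]

theorem hasDerivAt_of_eventually_add_smul_eq_zero {G : E → F} {G' : E →L[𝕜] F} {S : F →L[𝕜] E}
    {θ : 𝕜 → E} {u : 𝕜 → F} (hstat : ∀ᶠ l in 𝓝 (0 : 𝕜), G (θ l) + l • u l = 0)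
    (hθ : ContinuousAt θ 0) (hu : ContinuousAt u 0) (hG : HasFDerivAt G G' (θ 0))
    (hS : Function.LeftInverse S G') : HasDerivAt θ (-S (u 0)) 0 := by
  have hsmul : HasDerivAt (fun l => -(l • u l)) (-u 0) 0 := by
    simpa only [sub_zero] using (hasDerivAt_sub_smul_of_continuousAt_s5 hu).fun_neg
  have hcomp : G ∘ θ =ᶠ[𝓝 0] fun l => -(l • u l) :=
    hstat.mono fun _ => eq_neg_of_add_eq_zero_left
  simpa using (hG.of_comp_of_leftInverse hθ hsmul.hasFDerivAt hcomp hS).hasDerivAt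

end StationaryPath

section Gradient

variable {𝕜 E : Type*} [RCLike 𝕜] [NormedAddCommGroup E] [InnerProductSpace 𝕜 E] [CompleteSpace E]

theorem continuousAt_gradient_of_contDiffAt_s5 {f : E → 𝕜} {x : E} (hf : ContDiffAt 𝕜 1 f x) :
    ContinuousAt (gradient f) x :=
  (InnerProductSpace.toDual 𝕜 E).symm.continuous.continuousAt.comp
    (hf.continuousAt_fderiv one_ne_zero)

theorem hasDerivAt_comp_of_hasGradientAt {f : E → 𝕜} {f' v : E} {θ : 𝕜 → E} {t : 𝕜}
    (hf : HasGradientAt f f' (θ t)) (hθ : HasDerivAt θ v t) :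
    HasDerivAt (f ∘ θ) (inner 𝕜 f' v) t :=
  hf.hasFDerivAt.comp_hasDerivAt t hθ

end Gradient

theorem regvar_finite_difference_limit_general
    {E : Type*} [NormedAddCommGroup E] [InnerProductSpace ℝ E] [CompleteSpace E]
    {L f : E → ℝ} {θ : ℝ → E} {H : E ≃L[ℝ] E}
    (hstat : ∀ᶠ l in 𝓝 (0 : ℝ), gradient L (θ l) + l • gradient f (θ l) = 0)
    (hθ : ContinuousAt θ 0) (hf : DifferentiableAt ℝ f (θ 0))
    (hgradf : ContinuousAt (gradient f) (θ 0))
    (hL : HasFDerivAt (gradient L) (H : E →L[ℝ] E) (θ 0)) :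
    Filter.Tendsto (fun l : ℝ => l⁻¹ * (f (θ l) - f (θ 0))) (𝓝[≠] (0 : ℝ))
      (𝓝 (-⟪gradient f (θ 0), H.symm (gradient f (θ 0))⟫)) := by
  have hpath : HasDerivAt θ (-H.symm (gradient f (θ 0))) 0 :=
    hasDerivAt_of_eventually_add_smul_eq_zero (S := (H.symm : E →L[ℝ] E))
      hstat hθ (hgradf.comp hθ) hL H.symm_apply_apply
  have hpred := hasDerivAt_comp_of_hasGradientAt hf.hasGradientAt hpath
  simpa only [zero_add, smul_eq_mul, Function.comp_apply, inner_neg_right]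
    using hpred.tendsto_slope_zero

/-- The finite-difference RegVar estimator
`(1/λ)(f(θ̂(λ)) − f(θ̂(0)))` converges, as `λ → 0`, to the linearized-Laplace
variance `⟨∇f(θ̂ 0), P⁻¹ ∇f(θ̂ 0)⟩ = −⟨∇f(θ̂ 0), H⁻¹ ∇f(θ̂ 0)⟩` with `P = −H`. -/
theorem regvar_finite_difference_limit
    (d : ℕ) (L f : EuclideanSpace ℝ (Fin d) → ℝ)
    (θ : ℝ → EuclideanSpace ℝ (Fin d))
    (H : EuclideanSpace ℝ (Fin d) ≃L[ℝ] EuclideanSpace ℝ (Fin d))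
    (hstat : ∀ᶠ l in 𝓝 (0 : ℝ),
      gradient L (θ l) + l • gradient f (θ l) = 0)
    (hθ : DifferentiableAt ℝ θ 0)
    (hf : ContDiffAt ℝ 1 f (θ 0))
    (hL : HasFDerivAt (gradient L)
      (H : EuclideanSpace ℝ (Fin d) →L[ℝ] EuclideanSpace ℝ (Fin d)) (θ 0)) :
    Filter.Tendsto (fun l : ℝ => l⁻¹ * (f (θ l) - f (θ 0))) (𝓝[≠] (0 : ℝ))
      (𝓝 (-⟪gradient f (θ 0), H.symm (gradient f (θ 0))⟫)) := by
  exact regvar_finite_difference_limit_general hstat hθ.continuousAt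
    (hf.differentiableAt one_ne_zero) (continuousAt_gradient_of_contDiffAt_s5 hf) hL
end
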